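/- For each n ≥ 1 and each integer c, the statistic s_c(σ) = n − run(σ) + (1+c)·lsg(op)(σ) + (2+c)·rsg(op)(σ) + (1−c)·lsg(clos)(σ) + (2−c)·rsg(clos)(σ) + lsg(sing)(σ) + 2·rsg(sing)(σ) + lsg(cont)(σ) + 2·rsg(cont)(σ) takes the same value on each σ ∈ S_n as the corresponding statistic with c = 0; consequently Σ_{σ∈S_n} q^{s_c(σ)} is independent of c. -/

import Mathlib

/-!
The values `s_c(σ)` and `s_0(σ)` differ by
`c * (lsg(op) + rsg(op) - lsg(clos) - rsg(clos))`, so everything rests on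
`lsg(op) + rsg(op) = lsg(clos) + rsg(clos)` (`opener_eq_closer`).

A run is determined, for this purpose, by its least value (where it starts) and its greatest value
(where it ends): `starts_iff` and `ends_iff`. The quantity `lsgAt σ v + rsgAt σ v` counts the runs
other than that of `v` whose open interval `(min, max)` contains `v`. Summed over openers this counts
the ordered pairs of intervals `(I, J)` with `min I ∈ J`; summed over closers, the ordered
pairs with `max I ∈ J`. Pairs with `I` nested inside `J` occur in both counts, and exchanging `I` and
`J` matches the crossing pairs of the first count with those of the second
(`card_interval_pairs`). Either way each unordered pair of intersecting intervals is counted once.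
-/

open Finset

namespace SS

variable {n : ℕ}

/-- `descB σ j = true` iff there is a descent between positions `j` and `j+1`
in the word `σ(1)σ(2)⋯σ(n)`. -/
def descB (σ : Equiv.Perm (Fin n)) (j : ℕ) : Bool :=
  if h : j + 1 < n then decide ((σ ⟨j+1, h⟩) < σ ⟨j, Nat.lt_of_succ_lt h⟩) else false

/-- The index of the maximal increasing run containing position `p`. -/
def runIdx (σ : Equiv.Perm (Fin n)) (p : ℕ) : ℕ :=
  ((Finset.range p).filter (fun j => descB σ j = true)).card

/-- The index of the run containing the value `v`. -/
def runOf (σ : Equiv.Perm (Fin n)) (v : Fin n) : ℕ := runIdx σ (σ.symm v).val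

/-- The number of maximal increasing runs of `σ`. -/
def runCount (σ : Equiv.Perm (Fin n)) : ℕ :=
  if n = 0 then 0 else runIdx σ n + 1

/-- `lsgAt σ v` : number of runs strictly to the left of (the run of) `v`
containing both an element smaller than `v` and an element greater than `v`. -/
def lsgAt (σ : Equiv.Perm (Fin n)) (v : Fin n) : ℕ :=
  ((Finset.range (runCount σ)).filter (fun r => r < runOf σ v ∧
      (∃ a : Fin n, runOf σ a = r ∧ a < v) ∧ (∃ b : Fin n, runOf σ b = r ∧ v < b))).card

/-- `rsgAt σ v` : number of runs strictly to the right of `v`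
containing both an element smaller than `v` and an element greater than `v`. -/
def rsgAt (σ : Equiv.Perm (Fin n)) (v : Fin n) : ℕ :=
  ((Finset.range (runCount σ)).filter (fun r => runOf σ v < r ∧
      (∃ a : Fin n, runOf σ a = r ∧ a < v) ∧ (∃ b : Fin n, runOf σ b = r ∧ v < b))).card

def lsg (σ : Equiv.Perm (Fin n)) : ℕ := ∑ v : Fin n, lsgAt σ v
def rsg (σ : Equiv.Perm (Fin n)) : ℕ := ∑ v : Fin n, rsgAt σ v

/-- position `p` begins a maximal increasing run. -/
def startsB (σ : Equiv.Perm (Fin n)) (p : ℕ) : Bool := p == 0 || descB σ (p - 1)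

/-- position `p` ends a maximal increasing run. -/
def endsB (σ : Equiv.Perm (Fin n)) (p : ℕ) : Bool := p + 1 == n || descB σ p

def openerB (σ : Equiv.Perm (Fin n)) (v : Fin n) : Bool :=
  startsB σ (σ.symm v).val && !endsB σ (σ.symm v).val
def closerB (σ : Equiv.Perm (Fin n)) (v : Fin n) : Bool :=
  endsB σ (σ.symm v).val && !startsB σ (σ.symm v).val
def singB (σ : Equiv.Perm (Fin n)) (v : Fin n) : Bool :=
  startsB σ (σ.symm v).val && endsB σ (σ.symm v).val
def contB (σ : Equiv.Perm (Fin n)) (v : Fin n) : Bool :=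
  !startsB σ (σ.symm v).val && !endsB σ (σ.symm v).val

def lsgOp (σ : Equiv.Perm (Fin n)) : ℕ :=
  ∑ v ∈ univ.filter (fun v : Fin n => openerB σ v = true), lsgAt σ v
def rsgOp (σ : Equiv.Perm (Fin n)) : ℕ :=
  ∑ v ∈ univ.filter (fun v : Fin n => openerB σ v = true), rsgAt σ v
def lsgClos (σ : Equiv.Perm (Fin n)) : ℕ :=
  ∑ v ∈ univ.filter (fun v : Fin n => closerB σ v = true), lsgAt σ v
def rsgClos (σ : Equiv.Perm (Fin n)) : ℕ :=
  ∑ v ∈ univ.filter (fun v : Fin n => closerB σ v = true), rsgAt σ v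
def lsgSing (σ : Equiv.Perm (Fin n)) : ℕ :=
  ∑ v ∈ univ.filter (fun v : Fin n => singB σ v = true), lsgAt σ v
def rsgSing (σ : Equiv.Perm (Fin n)) : ℕ :=
  ∑ v ∈ univ.filter (fun v : Fin n => singB σ v = true), rsgAt σ v
def lsgCont (σ : Equiv.Perm (Fin n)) : ℕ :=
  ∑ v ∈ univ.filter (fun v : Fin n => contB σ v = true), lsgAt σ v
def rsgCont (σ : Equiv.Perm (Fin n)) : ℕ :=
  ∑ v ∈ univ.filter (fun v : Fin n => contB σ v = true), rsgAt σ v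

/-- `[m]_q = 1 + q + ⋯ + q^{m-1}`. -/
def qint {R : Type*} [CommRing R] (q : R) (m : ℕ) : R := ∑ i ∈ Finset.range m, q ^ i

/-- `[n]_q! = [1]_q [2]_q ⋯ [n]_q`. -/
def qfact {R : Type*} [CommRing R] (q : R) (n : ℕ) : R := ∏ m ∈ Finset.range n, qint q (m+1)

/-- `moment b lam l h` : sum of the weights of all weighted Motzkin paths with `l` steps
starting at height `h` and ending at height `0`, where up steps have weight `1`,
a level step at height `k` has weight `b k`, and a down step from height `k`
has weight `lam k`.  The `n`th moment of the corresponding monic orthogonal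
polynomial sequence is `moment b lam n 0`. -/
def moment {R : Type*} [CommRing R] (b lam : ℕ → R) : ℕ → ℕ → R
  | 0, h => if h = 0 then 1 else 0
  | (l+1), h => moment b lam l (h+1) + b h * moment b lam l h +
      (if h = 0 then 0 else lam h * moment b lam l (h-1))

end SS
namespace SS

/-- The statistic `s_c` with coefficients `1+c, 2+c` on openers and `1-c, 2-c` on closers. -/
def sc {n : ℕ} (c : ℤ) (σ : Equiv.Perm (Fin n)) : ℤ :=
  (n : ℤ) - runCount σ + (1 + c) * lsgOp σ + (2 + c) * rsgOp σ
    + (1 - c) * lsgClos σ + (2 - c) * rsgClos σ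
    + lsgSing σ + 2 * rsgSing σ + lsgCont σ + 2 * rsgCont σ

end SS

namespace SS

/-! ### Pairs of intersecting intervals -/

/-- For intervals `(f r, g r)` with distinct left ends and distinct right ends, as many ordered pairs
have the left end of the first interval inside the second as have its right end there. -/
theorem card_interval_pairs {α ι : Type*} [LinearOrder α] (R : Finset ι) (f g : ι → α)
    (hfg : ∀ r ∈ R, f r < g r) (hf : Set.InjOn f R) (hg : Set.InjOn g R) :
    ∑ r ∈ R, (R.filter (fun s => f s < f r ∧ f r < g s)).card =
      ∑ r ∈ R, (R.filter (fun s => f s < g r ∧ g r < g s)).card := by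
  classical
  simp only [Finset.card_filter]
  rw [← Finset.sum_product', ← Finset.sum_product', ← Finset.card_filter, ← Finset.card_filter]
  -- Nested pairs are fixed; crossing pairs are swapped.
  refine Finset.card_nbij' (fun x => if g x.1 < g x.2 then x else x.swap)
    (fun x => if f x.2 < f x.1 then x else x.swap) ?_ ?_ ?_ ?_
  · rintro ⟨r, s⟩ hx
    simp only [coe_filter, mem_product, Set.mem_ofPred_eq] at hx ⊢
    obtain ⟨⟨hr, hs⟩, h1, h2⟩ := hx
    have h3 := hfg r hr
    split_ifs with h
    · exact ⟨⟨hr, hs⟩, h1.trans h3, h⟩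
    · refine ⟨⟨hs, hr⟩, h2, lt_of_le_of_ne (not_lt.1 h) fun e => ?_⟩
      have := hg hs hr e
      subst this
      exact lt_irrefl _ h1
  · rintro ⟨r, s⟩ hx
    simp only [coe_filter, mem_product, Set.mem_ofPred_eq] at hx ⊢
    obtain ⟨⟨hr, hs⟩, h1, h2⟩ := hx
    have h3 := hfg r hr
    split_ifs with h
    · exact ⟨⟨hr, hs⟩, h, h3.trans h2⟩
    · refine ⟨⟨hs, hr⟩, lt_of_le_of_ne (not_lt.1 h) fun e => ?_, h1⟩
      have := hf hr hs e
      subst this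
      exact lt_irrefl _ h2
  · rintro ⟨r, s⟩ hx
    simp only [coe_filter, mem_product, Set.mem_ofPred_eq] at hx
    obtain ⟨⟨hr, hs⟩, h1, h2⟩ := hx
    by_cases h : g r < g s
    · simp [h, h1]
    · simp [h, h1.le]
  · rintro ⟨r, s⟩ hx
    simp only [coe_filter, mem_product, Set.mem_ofPred_eq] at hx
    obtain ⟨⟨hr, hs⟩, h1, h2⟩ := hx
    by_cases h : f s < f r
    · simp [h, h2]
    · simp [h, h2.le]

/-! ### Spanning classes of a partition of a linear order -/

/-- The classes of `ρ` other than that of `v` that contain both a smaller and a greater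
element than `v`. -/
def spanning {α : Type*} [LinearOrder α] [Fintype α] (ρ : α → ℕ) (v : α) : Finset ℕ :=
  (univ.image ρ).filter
    (fun r => r ≠ ρ v ∧ (∃ a, ρ a = r ∧ a < v) ∧ (∃ b, ρ b = r ∧ v < b))

/-- In any partition of a finite linear order (the fibres of `ρ`), the total number of spanning
classes is the same over the minima of the non-singleton classes as over their maxima. -/
theorem sum_spanning {α : Type*} [LinearOrder α] [Fintype α] (ρ : α → ℕ) (O C : Finset α)
    (hO : ∀ v, v ∈ O ↔ (∀ a, ρ a = ρ v → v ≤ a) ∧ ¬ ∀ a, ρ a = ρ v → a ≤ v)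
    (hC : ∀ v, v ∈ C ↔ (∀ a, ρ a = ρ v → a ≤ v) ∧ ¬ ∀ a, ρ a = ρ v → v ≤ a) :
    ∑ v ∈ O, (spanning ρ v).card = ∑ v ∈ C, (spanning ρ v).card := by
  classical
  have hmin : ∀ v, ∃ m, ρ m = ρ v ∧ ∀ a, ρ a = ρ v → m ≤ a := by
    intro v
    obtain ⟨m, hm, h⟩ := Finset.exists_min_image (univ.filter (fun a => ρ a = ρ v)) id ⟨v, by simp⟩
    exact ⟨m, by simpa using hm, fun a ha => h a (by simpa using ha)⟩
  have hmax : ∀ v, ∃ m, ρ m = ρ v ∧ ∀ a, ρ a = ρ v → a ≤ m := by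
    intro v
    obtain ⟨m, hm, h⟩ := Finset.exists_max_image (univ.filter (fun a => ρ a = ρ v)) id ⟨v, by simp⟩
    exact ⟨m, by simpa using hm, fun a ha => h a (by simpa using ha)⟩
  choose mn hmn hmn' using hmin
  choose mx hmx hmx' using hmax
  have hlt : ∀ o ∈ O, o < mx o := by
    intro o ho
    refine lt_of_le_of_ne (hmx' o o rfl) fun e => ((hO o).1 ho).2 ?_
    intro a ha
    rw [e]
    exact hmx' o a ha
  have hinj : ∀ o ∈ O, ∀ p ∈ O, ρ o = ρ p → o = p := fun o ho p hp h =>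
    le_antisymm (((hO o).1 ho).1 p h.symm) (((hO p).1 hp).1 o h)
  have hmxinj : Set.InjOn mx O := fun o ho p hp h =>
    hinj o ho p hp (by rw [← hmx o, ← hmx p, h])
  -- At an extremal element of a class, the class itself is never spanning.
  have key : ∀ v, ((∀ a, ρ a = ρ v → v ≤ a) ∨ (∀ a, ρ a = ρ v → a ≤ v)) →
      (spanning ρ v).card = (O.filter (fun o => o < v ∧ v < mx o)).card := by
    intro v hv
    symm
    refine Finset.card_nbij ρ ?_ ?_ ?_
    · intro o ho
      simp only [coe_filter, Set.mem_ofPred_eq] at ho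
      obtain ⟨ho, h1, h2⟩ := ho
      simp only [spanning, coe_filter, Set.mem_ofPred_eq]
      refine ⟨by simp, fun e => ?_, ⟨o, rfl, h1⟩, ⟨mx o, hmx o, h2⟩⟩
      rcases hv with hv | hv
      · exact absurd (hv o e) (not_le.2 h1)
      · exact absurd (hv (mx o) ((hmx o).trans e)) (not_le.2 h2)
    · intro o ho p hp h
      simp only [coe_filter, Set.mem_ofPred_eq] at ho hp
      exact hinj o ho.1 p hp.1 h
    · intro r hr
      simp only [spanning, coe_filter, Set.mem_ofPred_eq] at hr
      obtain ⟨-, -, ⟨a, rfl, ha⟩, ⟨b, hb, hvb⟩⟩ := hr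
      have h1 : mn a < v := (hmn' a a rfl).trans_lt ha
      have h2 : ρ b = ρ (mn a) := hb.trans (hmn a).symm
      refine ⟨mn a, ?_, hmn a⟩
      simp only [coe_filter, Set.mem_ofPred_eq]
      refine ⟨(hO _).2 ⟨fun x hx => hmn' a x (hx.trans (hmn a)), fun h => ?_⟩, h1,
        hvb.trans_le (hmx' _ b h2)⟩
      exact absurd (h b h2) (not_le.2 (h1.trans hvb))
  have hCO : ∑ v ∈ C, (spanning ρ v).card = ∑ o ∈ O, (spanning ρ (mx o)).card := by
    symm
    refine Finset.sum_nbij mx ?_ hmxinj ?_ (fun _ _ => rfl)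
    · intro o ho
      refine (hC _).2 ⟨fun a ha => hmx' o a (ha.trans (hmx o)), fun h => ?_⟩
      exact absurd (h o (hmx o).symm) (not_le.2 (hlt o ho))
    · intro c hc
      have hc' := (hC c).1 hc
      refine ⟨mn c, (hO _).2 ⟨fun a ha => hmn' c a (ha.trans (hmn c)), fun h => hc'.2 ?_⟩, ?_⟩
      · intro a ha
        exact (h c (hmn c).symm).trans (hmn' c a ha)
      · exact le_antisymm (hc'.1 _ ((hmx _).trans (hmn c))) (hmx' _ c (hmn c).symm)
  rw [hCO, Finset.sum_congr rfl fun v hv => key v (Or.inl ((hO v).1 hv).1),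
    Finset.sum_congr rfl fun v (_ : v ∈ O) =>
      key (mx v) (Or.inr fun a ha => hmx' v a (ha.trans (hmx v)))]
  exact card_interval_pairs O id mx hlt (Set.injOn_id _) hmxinj

/-! ### Increasing runs of a permutation -/

variable {n : ℕ}

theorem runIdx_succ (σ : Equiv.Perm (Fin n)) (p : ℕ) :
    runIdx σ (p + 1) = runIdx σ p + if descB σ p = true then 1 else 0 := by
  unfold runIdx
  rw [Finset.range_add_one, Finset.filter_insert]
  split_ifs with h
  · rw [Finset.card_insert_of_notMem (by simp)]
  · simp

theorem runIdx_mono (σ : Equiv.Perm (Fin n)) : Monotone (runIdx σ) :=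
  monotone_nat_of_le_succ fun p => by rw [runIdx_succ]; omega

theorem runOf_apply (σ : Equiv.Perm (Fin n)) (p : Fin n) : runOf σ (σ p) = runIdx σ p := by
  simp [runOf]

theorem lt_of_not_descB (σ : Equiv.Perm (Fin n)) (j : ℕ) (h : j + 1 < n)
    (hd : ¬ descB σ j = true) : σ ⟨j, Nat.lt_of_succ_lt h⟩ < σ ⟨j + 1, h⟩ := by
  simp only [descB, h, dite_true, decide_eq_true_eq, not_lt] at hd
  refine lt_of_le_of_ne hd fun e => ?_
  have := σ.injective e
  simp at this

/-- A permutation increases along each of its runs. -/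
theorem lt_of_runIdx_eq (σ : Equiv.Perm (Fin n)) (p : ℕ) (hp : p < n) (q : ℕ) (hq : q < n)
    (hpq : p < q) (h : runIdx σ p = runIdx σ q) : σ ⟨p, hp⟩ < σ ⟨q, hq⟩ := by
  induction q with
  | zero => omega
  | succ q ih =>
    have h1 : runIdx σ p ≤ runIdx σ q := runIdx_mono σ (by omega)
    have h2 := runIdx_succ σ q
    have hd : ¬ descB σ q = true := by
      intro hd
      simp only [hd, if_true] at h2
      omega
    have h3 := lt_of_not_descB σ q hq hd
    simp only [hd] at h2
    rcases Nat.lt_succ_iff_lt_or_eq.1 hpq with h4 | rfl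
    · exact (ih (by omega) h4 (by simp at h2; omega)).trans h3
    · exact h3

theorem starts_iff (σ : Equiv.Perm (Fin n)) (v : Fin n) :
    startsB σ (σ.symm v).val = true ↔ ∀ a, runOf σ a = runOf σ v → v ≤ a := by
  obtain ⟨p, rfl⟩ := σ.surjective v
  simp only [Equiv.symm_apply_apply]
  constructor
  · intro hs a ha
    obtain ⟨q, rfl⟩ := σ.surjective a
    rw [runOf_apply, runOf_apply] at ha
    rcases lt_trichotomy p.val q.val with h | h | h
    · exact (lt_of_runIdx_eq σ p p.2 q q.2 h ha.symm).le
    · exact (congrArg σ (Fin.ext h)).le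
    · exfalso
      simp only [startsB, Bool.or_eq_true, beq_iff_eq] at hs
      rcases hs with hs | hs
      · omega
      · have h1 := runIdx_succ σ (p.val - 1)
        have h2 : runIdx σ q ≤ runIdx σ (p.val - 1) := runIdx_mono σ (by omega)
        rw [Nat.sub_add_cancel (by omega)] at h1
        simp only [hs, if_true] at h1
        omega
  · intro h
    by_contra hs
    simp only [startsB, Bool.or_eq_true, beq_iff_eq, not_or] at hs
    obtain ⟨p, hp⟩ := p
    obtain _ | p := p
    · exact hs.1 rfl
    · simp only [Nat.add_sub_cancel] at hs
      have h1 := runIdx_succ σ p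
      simp only [hs.2] at h1
      have h2 := h (σ ⟨p, by omega⟩) (by rw [runOf_apply, runOf_apply]; simpa using h1.symm)
      exact absurd h2 (not_le.2 (lt_of_not_descB σ p hp hs.2))

theorem ends_iff (σ : Equiv.Perm (Fin n)) (v : Fin n) :
    endsB σ (σ.symm v).val = true ↔ ∀ a, runOf σ a = runOf σ v → a ≤ v := by
  obtain ⟨p, rfl⟩ := σ.surjective v
  simp only [Equiv.symm_apply_apply]
  constructor
  · intro hs a ha
    obtain ⟨q, rfl⟩ := σ.surjective a
    rw [runOf_apply, runOf_apply] at ha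
    rcases lt_trichotomy q.val p.val with h | h | h
    · exact (lt_of_runIdx_eq σ q q.2 p p.2 h ha).le
    · exact (congrArg σ (Fin.ext h)).le
    · exfalso
      simp only [endsB, Bool.or_eq_true, beq_iff_eq] at hs
      rcases hs with hs | hs
      · omega
      · have h1 := runIdx_succ σ p.val
        have h2 : runIdx σ (p.val + 1) ≤ runIdx σ q := runIdx_mono σ (by omega)
        simp only [hs, if_true] at h1
        omega
  · intro h
    by_contra hs
    simp only [endsB, Bool.or_eq_true, beq_iff_eq, not_or] at hs
    obtain ⟨p, hp⟩ := p
    have hp' : p + 1 < n := by simp only at hs; omega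
    have h1 := runIdx_succ σ p
    simp only [hs.2] at h1
    have h2 := h (σ ⟨p + 1, hp'⟩) (by rw [runOf_apply, runOf_apply]; simpa using h1)
    exact absurd h2 (not_le.2 (lt_of_not_descB σ p hp' hs.2))

theorem runOf_lt_runCount (σ : Equiv.Perm (Fin n)) (a : Fin n) : runOf σ a < runCount σ := by
  have h : runIdx σ (σ.symm a) ≤ runIdx σ n := runIdx_mono σ (σ.symm a).2.le
  have hn : n ≠ 0 := by have := a.2; omega
  simp only [runOf, runCount, hn, if_false]
  omega

/-! ### Openers and closers -/

theorem lsgAt_add_rsgAt (σ : Equiv.Perm (Fin n)) (v : Fin n) :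
    lsgAt σ v + rsgAt σ v = (spanning (runOf σ) v).card := by
  unfold lsgAt rsgAt
  rw [← Finset.card_union_of_disjoint]
  · congr 1
    ext r
    simp only [spanning, mem_union, mem_filter, mem_range, mem_image, mem_univ, true_and]
    constructor
    · rintro (⟨_, h, ⟨a, ha, ha'⟩, hb⟩ | ⟨_, h, ⟨a, ha, ha'⟩, hb⟩)
      · exact ⟨⟨a, ha⟩, h.ne, ⟨a, ha, ha'⟩, hb⟩
      · exact ⟨⟨a, ha⟩, h.ne', ⟨a, ha, ha'⟩, hb⟩
    · rintro ⟨⟨a, rfl⟩, h, hb⟩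
      have := runOf_lt_runCount σ a
      rcases lt_or_gt_of_ne h with h | h
      · exact Or.inl ⟨this, h, hb⟩
      · exact Or.inr ⟨this, h, hb⟩
  · rw [Finset.disjoint_left]
    intro r h1 h2
    simp only [mem_filter] at h1 h2
    omega

theorem opener_eq_closer (σ : Equiv.Perm (Fin n)) :
    lsgOp σ + rsgOp σ = lsgClos σ + rsgClos σ := by
  unfold lsgOp rsgOp lsgClos rsgClos
  rw [← Finset.sum_add_distrib, ← Finset.sum_add_distrib]
  simp only [lsgAt_add_rsgAt]
  apply sum_spanning
  · intro v
    rw [← starts_iff, ← ends_iff]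
    simp [openerB]
  · intro v
    rw [← starts_iff, ← ends_iff]
    simp [closerB]

end SS

open SS in
/-- `s_c(σ) = s_0(σ)` for every `σ`, hence the generating function is independent of `c`. -/
theorem stmt5 (n : ℕ) (hn : 1 ≤ n) (c : ℤ) :
    (∀ σ : Equiv.Perm (Fin n), sc c σ = sc 0 σ) ∧
    (∀ q : ℚ, q ≠ 0 →
      ∑ σ : Equiv.Perm (Fin n), q ^ (sc c σ) = ∑ σ : Equiv.Perm (Fin n), q ^ (sc 0 σ)) := by
  have h : ∀ σ : Equiv.Perm (Fin n), sc c σ = sc 0 σ := by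
    intro σ
    have h1 : (lsgOp σ : ℤ) + rsgOp σ = lsgClos σ + rsgClos σ := by
      exact_mod_cast opener_eq_closer σ
    unfold sc
    linear_combination c * h1
  exact ⟨h, fun q _ => Finset.sum_congr rfl fun σ _ => by rw [h σ]⟩
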